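/- arXiv:1901.00474 — 4 statements merged into one kernel-verified Lean document; each statement's English description precedes it below -/
import Mathlib

section
/- Let n be a natural number and let M be an n×n matrix with entries in the ring ℤ[t^{±1}] of Laurent polynomials over ℤ. Suppose that the evaluation of det(M) at t = 1 equals 1. Then the cokernel module ℤ[t^{±1}]^n / M·ℤ[t^{±1}]^n has no ℤ-torsion; that is, for every column vector x ∈ ℤ[t^{±1}]^n and every nonzero integer k, if k·x lies in the image of the linear map given by M, then x itself lies in the image of M. -/
/-! If `M y = k x`, multiplying by the adjugate of `M` gives `det M • y = k • adj(M) x`, so `k`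
divides every entry of `det M • y`. Since `det M` takes the value `1` at `t = 1`, it is nonzero
modulo every prime `p`, and `𝔽_p[t^{±1}]` is a domain; cancelling the primes of `k` one at a time
(`C_dvd_of_C_dvd_mul`) shows that `k` divides `y`. Writing `y = k z`, torsion-freeness of
`ℤ[t^{±1}]` yields `M z = x`. -/

open LaurentPolynomial Matrix

/-- Evaluation at `t = 1`: the ring homomorphism `ℤ[t^{±1}] → ℤ` sending `T` to `1`. -/
noncomputable def evalOneLaurent : LaurentPolynomial ℤ →ₐ[ℤ] ℤ :=
  AddMonoidAlgebra.lift ℤ ℤ ℤ (1 : Multiplicative ℤ →* ℤ)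

/-- The kernel of the coefficientwise reduction `ℤ[t^{±1}] → (ℤ/p)[t^{±1}]` consists of the
multiples of `p`. -/
theorem C_dvd_iff_map_eq_zero (p : ℕ) (f : LaurentPolynomial ℤ) :
    (C (p : ℤ) : LaurentPolynomial ℤ) ∣ f ↔
      AddMonoidAlgebra.mapRingHom ℤ (Int.castRingHom (ZMod p)) f = 0 := by
  constructor
  · rintro ⟨g, rfl⟩
    ext n
    rw [← smul_eq_C_mul, AddMonoidAlgebra.coeff_mapRingHom, AddMonoidAlgebra.coeff_smul,
      Finsupp.smul_apply, smul_eq_mul, map_mul]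
    simp
  · intro h
    have hd : ∀ n, (p : ℤ) ∣ f.coeff n := fun n => by
      rw [← ZMod.intCast_zmod_eq_zero_iff_dvd]
      simpa using congrArg (fun g => AddMonoidAlgebra.coeff g n) h
    refine ⟨.ofCoeff (f.coeff.mapRange (· / (p : ℤ)) (by simp)), ?_⟩
    ext n
    rw [← smul_eq_C_mul, AddMonoidAlgebra.coeff_smul, Finsupp.smul_apply, smul_eq_mul,
      AddMonoidAlgebra.coeff_ofCoeff, Finsupp.mapRange_apply, Int.mul_ediv_cancel' (hd n)]

theorem evalOneLaurent_C (a : ℤ) : evalOneLaurent (C a) = a := by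
  rw [C_eq_algebraMap, AlgHom.commutes]; rfl

/-- A prime number stays prime in `ℤ[t^{±1}]`, because the quotient `𝔽_p[t^{±1}]` is a domain. -/
theorem prime_C_of_prime {p : ℕ} (hp : p.Prime) : Prime (C (p : ℤ) : LaurentPolynomial ℤ) := by
  have := Fact.mk hp
  refine ⟨fun h => ?_, fun h => ?_, fun f g h => ?_⟩
  · have := congrArg evalOneLaurent h
    rw [evalOneLaurent_C, map_zero] at this
    exact hp.ne_zero (by exact_mod_cast this)
  · have := h.map evalOneLaurent
    rw [evalOneLaurent_C] at this
    exact (Nat.prime_iff_prime_int.mp hp).not_isUnit this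
  · simp only [C_dvd_iff_map_eq_zero, map_mul] at h ⊢
    exact mul_eq_zero.mp h

/-- A factor `d` with `d(1) = 1` may be cancelled from a divisibility by a nonzero integer: no prime
number divides `d`, since it would divide `d(1) = 1`. -/
theorem C_dvd_of_C_dvd_mul {d : LaurentPolynomial ℤ} (hd : evalOneLaurent d = 1) {k : ℕ}
    (hk : k ≠ 0) (f : LaurentPolynomial ℤ)
    (h : (C (k : ℤ) : LaurentPolynomial ℤ) ∣ d * f) : (C (k : ℤ) : LaurentPolynomial ℤ) ∣ f := by
  induction k using induction_on_primes generalizing f with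
  | zero => exact absurd rfl hk
  | one => simp
  | prime_mul p a hp ih =>
    have hP := prime_C_of_prime hp
    rw [Nat.cast_mul, map_mul] at h ⊢
    have hpd : ¬ (C (p : ℤ) : LaurentPolynomial ℤ) ∣ d := fun h' => by
      have := map_dvd evalOneLaurent h'
      rw [evalOneLaurent_C, hd] at this
      exact (Nat.prime_iff_prime_int.mp hp).not_isUnit (isUnit_of_dvd_one this)
    obtain ⟨g, rfl⟩ := (hP.dvd_or_dvd ((dvd_mul_right _ _).trans h)).resolve_left hpd
    rw [mul_left_comm, mul_dvd_mul_iff_left hP.ne_zero] at h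
    exact mul_dvd_mul_left _ (ih (right_ne_zero_of_mul hk) g h)

/-- If `M` is a square matrix over `ℤ[t^{±1}]` with `det(M)(1) = 1`, then the cokernel of `M`
has no `ℤ`-torsion: if `k • x` is in the image of `M` for a nonzero integer `k`, then so is
`x` itself. -/
theorem cokernel_no_int_torsion (n : ℕ)
    (M : Matrix (Fin n) (Fin n) (LaurentPolynomial ℤ))
    (hM : evalOneLaurent M.det = 1)
    (x : Fin n → LaurentPolynomial ℤ) (k : ℤ) (hk : k ≠ 0)
    (hx : ∃ y : Fin n → LaurentPolynomial ℤ, M.mulVec y = k • x) :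
    ∃ z : Fin n → LaurentPolynomial ℤ, M.mulVec z = x := by
  obtain ⟨y, hy⟩ := hx
  have hadj : M.det • y = k • M.adjugate.mulVec x := by
    rw [← Matrix.mulVec_smul, ← hy, Matrix.mulVec_mulVec, Matrix.adjugate_mul, Matrix.smul_mulVec,
      Matrix.one_mulVec]
  have hdvd : ∀ i, (C k : LaurentPolynomial ℤ) ∣ y i := fun i => by
    have h1 : (C k : LaurentPolynomial ℤ) ∣ M.det * y i :=
      ⟨M.adjugate.mulVec x i, by
        rw [← smul_eq_C_mul]; exact congrFun hadj i⟩
    -- `k` and `|k|` are associated, which reduces to natural numbers.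
    have habs : Associated (C (k.natAbs : ℤ) : LaurentPolynomial ℤ) (C k) :=
      (Int.associated_natAbs k).symm.map (C : ℤ →+* LaurentPolynomial ℤ)
    rw [← habs.dvd_iff_dvd_left] at h1 ⊢
    exact C_dvd_of_C_dvd_mul hM (Int.natAbs_ne_zero.mpr hk) _ h1
  choose z hz using hdvd
  refine ⟨z, ?_⟩
  have hyz : y = k • z := funext fun i => by
    rw [hz i, Pi.smul_apply, smul_eq_C_mul]
  rw [hyz, Matrix.mulVec_smul] at hy
  exact smul_right_injective _ hk hy
end

section
/- Let n be a natural number and let U₊, U₋, Z₊, Z₋ be n×n matrices with integer entries. Define the 2n×2n integer matrices V₊ = [[0, U₊], [U₋ᵀ, Z₊]] and V₋ = [[0, U₋], [U₊ᵀ, Z₋]] (block form, with 0 the zero n×n block and U^ᵀ the transpose). View these as matrices over ℤ[t^{±1}] via the constant embedding and set f = det(T·U₊ − U₋) ∈ ℤ[t^{±1}]. Then det(T·V₊ − V₋) = T^n · f · σ(f), where σ is the ring automorphism of ℤ[t^{±1}] sending T to T^{−1}. In particular det(T·V₊ − V₋) is a unit of ℤ[t^{±1}] times a product of the form f(t)·f(t^{−1}),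 i.e. it has the factorization property. -/
/-!
Since the top-left block vanishes, the determinant of `T·V₊ - V₋` is, up to the sign `(-1)^n`, the
product of the determinants of its off-diagonal blocks (`det_fromBlocks_zero₁₁`). These blocks are
`A = T·U₊ - U₋`, of determinant `f`, and `T·U₋ᵀ - U₊ᵀ = (-T)·σ(A)ᵀ`, of determinant
`(-1)^n T^n σ(f)`. The two signs cancel.
-/

open LaurentPolynomial Matrix

/-- Right multiplication by `[[0, 1], [-1, 0]]`, which has determinant one, makes the matrix block
lower triangular. -/
theorem det_fromBlocks_zero₁₁ {R : Type*} [CommRing R] {n : ℕ}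
    (B C D : Matrix (Fin n) (Fin n) R) :
    (Matrix.fromBlocks 0 B C D).det = (-1) ^ n * B.det * C.det := by
  have hJ : (Matrix.fromBlocks 0 1 (-1) 0 : Matrix (Fin n ⊕ Fin n) (Fin n ⊕ Fin n) R).det = 1 := by
    -- `[[0, 1], [-1, 0]]` is a product of three transvections.
    have h : (Matrix.fromBlocks 0 1 (-1) 0 : Matrix (Fin n ⊕ Fin n) (Fin n ⊕ Fin n) R)
        = Matrix.fromBlocks 1 1 0 1 * Matrix.fromBlocks 1 0 (-1) 1
          * Matrix.fromBlocks 1 1 0 1 := by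
      simp [Matrix.fromBlocks_multiply]
    rw [h]
    simp only [det_mul, det_fromBlocks_zero₂₁, det_fromBlocks_zero₁₂, det_one, mul_one]
  have h : Matrix.fromBlocks 0 B C D * Matrix.fromBlocks 0 1 (-1) 0
      = Matrix.fromBlocks (-B) 0 (-D) C := by
    simp [Matrix.fromBlocks_multiply]
  have h2 := congrArg Matrix.det h
  rw [det_mul, hJ, mul_one, det_fromBlocks_zero₁₂, det_neg, Fintype.card_fin] at h2
  exact h2

/-- Let `Vplus = [[0, Uplus], [Uminusᵀ, Zplus]]` and `Vminus = [[0, Uminus], [Uplusᵀ, Zminus]]`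
be integer block matrices, viewed over `ℤ[t^{±1}]`, and let `f = det(T·Uplus − Uminus)`.
Then `det(T·Vplus − Vminus) = T^n · f · σ(f)` where `σ = invert` sends `T` to `T⁻¹`; in
particular, `det(T·Vplus − Vminus)` is a unit times a product `g · σ(g)`, i.e. it has the
factorization property. -/
theorem det_factorization (n : ℕ) (Uplus Uminus Zplus Zminus : Matrix (Fin n) (Fin n) ℤ)
    (f : LaurentPolynomial ℤ)
    (hf : f = ((T 1 : LaurentPolynomial ℤ) • Uplus.map (C : ℤ →+* LaurentPolynomial ℤ)
        - Uminus.map (C : ℤ →+* LaurentPolynomial ℤ)).det) :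
    ((T 1 : LaurentPolynomial ℤ) •
          (Matrix.fromBlocks 0 Uplus Uminusᵀ Zplus).map (C : ℤ →+* LaurentPolynomial ℤ)
        - (Matrix.fromBlocks 0 Uminus Uplusᵀ Zminus).map (C : ℤ →+* LaurentPolynomial ℤ)).det
      = T (n : ℤ) * f * invert f ∧
    ∃ (u : (LaurentPolynomial ℤ)ˣ) (g : LaurentPolynomial ℤ),
      ((T 1 : LaurentPolynomial ℤ) •
          (Matrix.fromBlocks 0 Uplus Uminusᵀ Zplus).map (C : ℤ →+* LaurentPolynomial ℤ)
        - (Matrix.fromBlocks 0 Uminus Uplusᵀ Zminus).map (C : ℤ →+* LaurentPolynomial ℤ)).det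
      = (u : LaurentPolynomial ℤ) * g * invert g := by
  have key : ((T 1 : LaurentPolynomial ℤ) •
          (Matrix.fromBlocks 0 Uplus Uminusᵀ Zplus).map (C : ℤ →+* LaurentPolynomial ℤ)
        - (Matrix.fromBlocks 0 Uminus Uplusᵀ Zminus).map (C : ℤ →+* LaurentPolynomial ℤ)).det
      = T (n : ℤ) * f * invert f := by
    set A := (T 1 : LaurentPolynomial ℤ) • Uplus.map (C : ℤ →+* LaurentPolynomial ℤ)
        - Uminus.map (C : ℤ →+* LaurentPolynomial ℤ) with hA
    have hblock : (T 1 : LaurentPolynomial ℤ) •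
          (Matrix.fromBlocks 0 Uplus Uminusᵀ Zplus).map (C : ℤ →+* LaurentPolynomial ℤ)
        - (Matrix.fromBlocks 0 Uminus Uplusᵀ Zminus).map (C : ℤ →+* LaurentPolynomial ℤ)
        = Matrix.fromBlocks 0 A ((-T 1 : LaurentPolynomial ℤ) • (A.map invert)ᵀ)
          ((T 1 : LaurentPolynomial ℤ) • Zplus.map (C : ℤ →+* LaurentPolynomial ℤ)
            - Zminus.map (C : ℤ →+* LaurentPolynomial ℤ)) := by
      have hT : (T 1 * T (-1) : LaurentPolynomial ℤ) = 1 := by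
        rw [← T_add]; simp
      ext1 i j
      rcases i with i | i <;> rcases j with j | j
      · simp
      · simp [hA]
      · simp only [hA, Matrix.sub_apply, Matrix.smul_apply, Matrix.map_apply, fromBlocks_apply₂₁, transpose_apply,
          smul_eq_mul, map_sub, map_mul, invert_T, invert_C]
        linear_combination (C (Uplus j i)) * hT
      · simp
    have hinv : (A.map invert).det = invert f := by
      rw [hf]
      exact (AlgEquiv.map_det invert A).symm
    have hsign : ((-1) ^ n * (-1) ^ n : LaurentPolynomial ℤ) = 1 := by
      rw [← mul_pow]; simp
    have hTn : (T 1 : LaurentPolynomial ℤ) ^ n = T (n : ℤ) := by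
      rw [T_pow, mul_one]
    rw [hblock, det_fromBlocks_zero₁₁, det_smul, det_transpose, hinv, ← hf, Fintype.card_fin,
      neg_pow (T 1 : LaurentPolynomial ℤ), hTn]
    linear_combination (T (n : ℤ) * f * invert f) * hsign
  exact ⟨key, (isUnit_T (n : ℤ)).unit, f, key⟩
end

section
/- Let R be a commutative ring, let n be a natural number, and let A, B be n×n matrices over R. Let M be the 2n×2n block-diagonal matrix [[A, 0], [0, B]]. Then for every choice of one row index and one column index of M, the determinant of the (2n−1)×(2n−1) matrix obtained from M by deleting that row and that column is divisible in R by det(A) or divisible by det(B). -/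
/-!
Deleting a single row leaves all the rows of one of the two diagonal blocks intact, say those of
`A`. Factor `[[A, 0], [0, B]] = [[A, 0], [0, 1]] * [[1, 0], [0, B]]`. The middle index of this
product may be restricted to the retained rows, because the deleted row index `l` lies in the
second block and `[[A, 0], [0, 1]]` has zero entries in column `l` outside row `l`. So the minor is
a product of two square determinants, and the first one, `det ([[A, 0], [0, 1]].submatrix r r)`,
is block triangular with `A` (reindexed) as a diagonal block. The retained columns play no role;
this is `det_dvd_det_submatrix_fromBlocks`. The other case follows by swapping the blocks.
-/

/-- If an injective row selection `r` hits every row of the first block, then `det A` divides the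
corresponding minor of `[[A, 0], [0, B]]`, whatever columns are selected. -/
theorem det_dvd_det_submatrix_fromBlocks {R m k s : Type*} [CommRing R]
    [Fintype m] [DecidableEq m] [Fintype k] [DecidableEq k] [Fintype s] [DecidableEq s]
    (A : Matrix m m R) (B : Matrix k k R) (r c : s → m ⊕ k)
    (hr : Function.Injective r) (h : ∀ a, ∃ x, r x = Sum.inl a) :
    A.det ∣ ((Matrix.fromBlocks A 0 0 B).submatrix r c).det := by
  have hfac : (Matrix.fromBlocks A 0 0 B).submatrix r c =
      (Matrix.fromBlocks A 0 0 1).submatrix r r * (Matrix.fromBlocks 1 0 0 B).submatrix r c := by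
    have hM : Matrix.fromBlocks A 0 0 B =
        Matrix.fromBlocks A 0 0 1 * Matrix.fromBlocks 1 0 0 B := by
      simp [Matrix.fromBlocks_multiply]
    ext x y
    rw [hM]
    simp only [Matrix.submatrix_apply, Matrix.mul_apply]
    symm
    apply Fintype.sum_of_injective r hr
    · intro z hz
      rcases z with a | l
      · exact absurd (h a) hz
      · have hx : r x ≠ Sum.inr l := fun e => hz ⟨x, e⟩
        rcases hrx : r x with a | l'
        · simp
        · have : l' ≠ l := by rintro rfl; exact hx hrx
          simp [Matrix.one_apply_ne this]
    · intro z
      rfl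
  rw [hfac, Matrix.det_mul]
  apply Dvd.dvd.mul_right
  choose f hf using h
  rw [Matrix.twoBlockTriangular_det _ (fun x => (r x).isLeft = true)]
  · apply Dvd.dvd.mul_right
    let e : m ≃ {x // (r x).isLeft = true} := Equiv.ofBijective
      (fun a => ⟨f a, by simp [hf]⟩) (by
        constructor
        · intro a b hab
          have hab' : f a = f b := congrArg Subtype.val hab
          have := congrArg r hab'
          rw [hf, hf] at this
          exact Sum.inl_injective this
        · rintro ⟨x, hx⟩
          obtain ⟨a, ha⟩ := Sum.isLeft_iff.1 hx
          exact ⟨a, Subtype.ext (hr ((hf a).trans ha.symm))⟩)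
    rw [← Matrix.det_submatrix_equiv_self e]
    apply dvd_of_eq
    congr 1
    ext a b
    change A a b = Matrix.fromBlocks A 0 0 1 (r (f a)) (r (f b))
    simp [hf]
  · intro x hx y hy
    obtain ⟨b, hb⟩ := Sum.isLeft_iff.1 hy
    obtain ⟨a, ha⟩ := Sum.isRight_iff.1 (show (r x).isRight = true by simpa using hx)
    simp [ha, hb]

/-- Every `(2n−1) × (2n−1)` minor of the block-diagonal matrix `[[A, 0], [0, B]]`
(obtained by deleting one row `i` and one column `j`) is divisible by `det A` or by
`det B`.  The deleted-row-and-column submatrix is encoded by injective parametrizations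
`r, c : Fin (2n−1) → Fin n ⊕ Fin n` of the complements of `{i}` and `{j}`. -/
theorem minor_blockDiagonal_dvd (R : Type*) [CommRing R] (n : ℕ)
    (A B : Matrix (Fin n) (Fin n) R) (i j : Fin n ⊕ Fin n)
    (r c : Fin (2 * n - 1) → Fin n ⊕ Fin n)
    (hr : Function.Injective r) (hc : Function.Injective c)
    (hr' : Set.range r = {i}ᶜ) (hc' : Set.range c = {j}ᶜ) :
    A.det ∣ ((Matrix.fromBlocks A 0 0 B).submatrix r c).det ∨
    B.det ∣ ((Matrix.fromBlocks A 0 0 B).submatrix r c).det := by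
  rcases i with i | i
  · right
    have hswap : (Matrix.fromBlocks A 0 0 B).submatrix r c =
        (Matrix.fromBlocks B 0 0 A).submatrix (Sum.swap ∘ r) (Sum.swap ∘ c) := by
      rw [← Matrix.submatrix_submatrix, Matrix.fromBlocks_submatrix_sum_swap_sum_swap]
    rw [hswap]
    refine det_dvd_det_submatrix_fromBlocks B A _ _
      (Sum.swap_leftInverse.injective.comp hr) fun a => ?_
    obtain ⟨x, hx⟩ : Sum.inr a ∈ Set.range r := by simp [hr']
    exact ⟨x, by simp [hx]⟩
  · left
    refine det_dvd_det_submatrix_fromBlocks A B r c hr fun a => ?_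
    change Sum.inl a ∈ Set.range r
    simp [hr']
end

section
/- Let n be a natural number and let V be an n×n matrix over ℤ[t^{±1}] such that det(V) = u·(2T − 1) for some unit u of ℤ[t^{±1}]. Let V^σ be the matrix obtained from V by applying entrywise the ring automorphism σ of ℤ[t^{±1}] sending T to T^{−1}. Then the ideal of ℤ[t^{±1}] generated by all (2n−1)×(2n−1) minors of the 2n×2n block-diagonal matrix [[V, 0], [0, V^σ]] (determinants of submatrices obtained by deleting one row and one column) is a proper ideal of ℤ[t^{±1}]. -/
/-!
Reduce along the ring homomorphism `ℤ[t^{±1}] → 𝔽₃`, `T ↦ -1`. It kills `2T - 1`, and it is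
unchanged by precomposition with `invert` because `(-1)⁻¹ = -1`. Hence both diagonal blocks reduce
to the same singular matrix `W` over `𝔽₃`. If `w ≠ 0` lies in the kernel of `W`, then `(w, 0)` and
`(0, w)` are both in the kernel of `diag(W, W)`. Whichever column is deleted, one of these two
vectors vanishes in that coordinate, so its restriction is a nonzero kernel vector of the
remaining minor. All the minors therefore reduce to `0`
(`det_submatrix_eq_zero_of_mulVec_eq_zero`), and the ideal they generate lies in the kernel of a
homomorphism to a field.
-/

open LaurentPolynomial Matrix

/-- Evaluation of integral Laurent polynomials at `T = -1`, modulo `3`. -/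
noncomputable def evalNegOneModThree : LaurentPolynomial ℤ →+* ZMod 3 :=
  LaurentPolynomial.eval₂ (Int.castRingHom (ZMod 3)) (-1)

lemma evalNegOneModThree_T_one : evalNegOneModThree (T 1) = -1 := by
  simp [evalNegOneModThree]

/-- Evaluation at `-1` does not see `T ↦ T⁻¹`, since `-1` is its own inverse. -/
lemma evalNegOneModThree_invert (p : LaurentPolynomial ℤ) :
    evalNegOneModThree (invert p) = evalNegOneModThree p := by
  induction p using LaurentPolynomial.induction_on' with
  | add p q hp hq => simp [hp, hq]
  | C_mul_T n a =>
    simp only [map_mul, invert_C, invert_T]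
    congr 1
    simp [evalNegOneModThree, ← _root_.inv_zpow]

/-- A submatrix formed from all columns except the `j`-th is singular as soon as the full matrix
kills a nonzero vector whose `j`-th coordinate is zero. -/
lemma det_submatrix_eq_zero_of_mulVec_eq_zero {ι κ K : Type*} [Fintype ι] [Fintype κ]
    [DecidableEq κ] [Field K] (M : Matrix ι ι K) (r c : κ → ι) (j : ι)
    (hc : Function.Injective c) (hcj : Set.range c = {j}ᶜ) (v : ι → K) (hv : v ≠ 0)
    (hvj : v j = 0) (hMv : M *ᵥ v = 0) : (M.submatrix r c).det = 0 := by
  refine Matrix.exists_mulVec_eq_zero_iff.mp ⟨v ∘ c, fun h => hv ?_, ?_⟩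
  · ext x
    by_cases hx : x = j
    · simp [hx, hvj]
    · obtain ⟨k, rfl⟩ : x ∈ Set.range c := by simp [hcj, hx]
      exact congrFun h k
  · ext k
    have hk : ∑ x, M (r k) x * v x = 0 := congrFun hMv (r k)
    refine Eq.trans (Fintype.sum_of_injective c hc _ _ (fun x hx => ?_) fun _ => rfl) hk
    have hxj : x = j := by simpa [hcj] using hx
    simp [hxj, hvj]


/-- Let `V` be an `n × n` matrix over `ℤ[t^{±1}]` with `det V = u · (2T − 1)` for some unit
`u`, and let `Vσ` be obtained from `V` by applying entrywise the automorphism `invert`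
(sending `T` to `T⁻¹`).  Then the ideal generated by all `(2n−1) × (2n−1)` minors of the
block-diagonal matrix `[[V, 0], [0, Vσ]]` (determinants of submatrices obtained by deleting
one row and one column) is a proper ideal of `ℤ[t^{±1}]`. -/
theorem span_minors_ne_top (n : ℕ) (V : Matrix (Fin n) (Fin n) (LaurentPolynomial ℤ))
    (u : (LaurentPolynomial ℤ)ˣ)
    (hV : V.det = (u : LaurentPolynomial ℤ) * (2 * T 1 - 1)) :
    Ideal.span {d : LaurentPolynomial ℤ |
        ∃ (i j : Fin n ⊕ Fin n) (r c : Fin (2 * n - 1) → Fin n ⊕ Fin n),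
          Function.Injective r ∧ Function.Injective c ∧
          Set.range r = {i}ᶜ ∧ Set.range c = {j}ᶜ ∧
          d = ((Matrix.fromBlocks V 0 0
                (V.map (invert : LaurentPolynomial ℤ → LaurentPolynomial ℤ))).submatrix
                  r c).det} ≠ ⊤ := by
  have hW : (V.map evalNegOneModThree).det = 0 := by
    rw [← RingHom.mapMatrix_apply, ← RingHom.map_det, hV, map_mul, map_sub, map_mul,
      evalNegOneModThree_T_one, map_one, map_ofNat]
    exact mul_eq_zero_of_right _ (by decide)
  obtain ⟨w, hw, hWw⟩ := Matrix.exists_mulVec_eq_zero_iff.mpr hW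
  have hM : (Matrix.fromBlocks V 0 0
      (V.map (invert : LaurentPolynomial ℤ → LaurentPolynomial ℤ))).map evalNegOneModThree =
      Matrix.fromBlocks (V.map evalNegOneModThree) 0 0 (V.map evalNegOneModThree) := by
    rw [Matrix.fromBlocks_map]
    congr 1
    · ext; simp
    · ext; simp
    · ext; simp [evalNegOneModThree_invert]
  refine fun htop => RingHom.ker_ne_top evalNegOneModThree (top_le_iff.mp (htop ▸ ?_))
  rw [Ideal.span_le]
  rintro _ ⟨i, j, r, c, -, hc, -, hcj, rfl⟩
  rw [SetLike.mem_coe, RingHom.mem_ker, RingHom.map_det, RingHom.mapMatrix_apply,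
    ← Matrix.submatrix_map, hM]
  -- The kernel vector is placed in the block that does not contain the deleted column.
  rcases j with j | j
  · refine det_submatrix_eq_zero_of_mulVec_eq_zero _ r c _ hc hcj (Sum.elim 0 w)
      (fun h => hw ?_) rfl ?_
    · ext k
      exact congrFun h (Sum.inr k)
    · simp [Matrix.fromBlocks_mulVec, hWw]
  · refine det_submatrix_eq_zero_of_mulVec_eq_zero _ r c _ hc hcj (Sum.elim w 0)
      (fun h => hw ?_) rfl ?_
    · ext k
      exact congrFun h (Sum.inl k)
    · simp [Matrix.fromBlocks_mulVec, hWw]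
end
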